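/- For each integer j ≥ 0 define the operator K*_j on L²(S², σ; ℂ) by (K*_j φ)(x) = −(i^j (j−1)/(4π j!)) ∫_{S²} |x−y|^{j−3} ⟨x−y, x⟩ φ(y) dσ(y) (note K*_1 = 0, and for j = 0 the kernel equals ⟨x−y, x⟩/(4π|x−y|³) = 1/(8π|x−y|) on the unit sphere). Then: (i) each K*_j is a bounded linear operator on L²(S², σ; ℂ); (ii) sup_j ‖K*_j‖ < ∞; and (iii) for every k ∈ ℂ the series ∑_{j=0}^∞ k^j K*_j converges in operator norm to the Neumann–Poincaré operator K^{k,*}, where (K^{k,*} φ)(x) = ∫_{S²} ⟨(∇G^k)(x−y), x⟩ φ(y) dσ(y). -/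

import Mathlib

open MeasureTheory
open scoped RealInnerProductSpace

noncomputable section

/-- The fundamental solution `G^k(z) = -e^{ik|z|}/(4π|z|)` of the Helmholtz operator
`Δ + k²` in `ℝ³`. -/
noncomputable def G (k : ℂ) (z : EuclideanSpace ℝ (Fin 3)) : ℂ :=
  -Complex.exp (Complex.I * k * ‖z‖) / (4 * Real.pi * ‖z‖ : ℝ)

/-- The gradient `∇G^k` of the fundamental solution, as a `ℂ³`-valued function. -/
noncomputable def gradG (k : ℂ) (z : EuclideanSpace ℝ (Fin 3)) (i : Fin 3) : ℂ :=
  fderiv ℝ (G k) z (EuclideanSpace.single i 1)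

/-- The surface measure on the unit sphere `S² ⊂ ℝ³`: the 2-dimensional Hausdorff
measure restricted to the sphere. -/
noncomputable def sphMeasure : Measure (EuclideanSpace ℝ (Fin 3)) :=
  (Measure.hausdorffMeasure 2).restrict (Metric.sphere (0 : EuclideanSpace ℝ (Fin 3)) 1)

abbrev E3 := EuclideanSpace ℝ (Fin 3)

/-- The projection forgetting the `i`-th coordinate. -/
def projE (i : Fin 3) (x : E3) : Fin 2 → ℝ := fun j => x (i.succAbove j)

lemma norm_sq_succAbove (i : Fin 3) (x : E3) :
    ‖x‖ ^ 2 = x i ^ 2 + (x (i.succAbove 0) ^ 2 + x (i.succAbove 1) ^ 2) := by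
  rw [EuclideanSpace.norm_sq_eq, Fin.sum_univ_succAbove _ i, Fin.sum_univ_two]
  simp

lemma proj_antilip (i : Fin 3) (s : ℝ) (hs : s = 1 ∨ s = -1) (x y : E3)
    (hx : ‖x‖ = 1) (hy : ‖y‖ = 1) (hxi : 1 / 2 ≤ s * x i) (hyi : 1 / 2 ≤ s * y i) :
    dist x y ≤ 5 * dist (projE i x) (projE i y) := by
  set d := dist (projE i x) (projE i y) with hd
  have hd0 : 0 ≤ d := dist_nonneg
  have h0 : |x (i.succAbove 0) - y (i.succAbove 0)| ≤ d := by
    have := dist_le_pi_dist (projE i x) (projE i y) 0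
    simpa [projE, Real.dist_eq] using this
  have h1 : |x (i.succAbove 1) - y (i.succAbove 1)| ≤ d := by
    have := dist_le_pi_dist (projE i x) (projE i y) 1
    simpa [projE, Real.dist_eq] using this
  have ex := norm_sq_succAbove i x
  have ey := norm_sq_succAbove i y
  have exy := norm_sq_succAbove i (x - y)
  simp only [PiLp.sub_apply] at exy
  rw [hx] at ex
  rw [hy] at ey
  generalize x i = a at *
  generalize y i = b at *
  generalize x (i.succAbove 0) = a0 at *
  generalize x (i.succAbove 1) = a1 at *
  generalize y (i.succAbove 0) = b0 at *
  generalize y (i.succAbove 1) = b1 at *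
  have ha0 : |a0 + b0| ≤ 2 := by
    rw [abs_le]; constructor <;> nlinarith [sq_nonneg a0, sq_nonneg b0, sq_nonneg a1, sq_nonneg b1, sq_nonneg a, sq_nonneg b]
  have ha1 : |a1 + b1| ≤ 2 := by
    rw [abs_le]; constructor <;> nlinarith [sq_nonneg a0, sq_nonneg b0, sq_nonneg a1, sq_nonneg b1, sq_nonneg a, sq_nonneg b]
  have key : |a - b| * |a + b| ≤ 4 * d := by
    rw [← abs_mul]
    have : (a - b) * (a + b) = -((a0 - b0) * (a0 + b0) + (a1 - b1) * (a1 + b1)) := by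
      linear_combination ey - ex
    rw [this, abs_neg]
    calc _ ≤ |(a0 - b0) * (a0 + b0)| + |(a1 - b1) * (a1 + b1)| := abs_add_le _ _
      _ ≤ d * 2 + d * 2 := by
        rw [abs_mul, abs_mul]
        gcongr
      _ = _ := by ring
  have hab : 1 ≤ |a + b| := by
    rcases hs with rfl | rfl
    · exact le_trans (by linarith) (le_abs_self _)
    · exact le_trans (by linarith) (neg_le_abs _)
  have h2 : |a - b| ≤ 4 * d := by nlinarith [abs_nonneg (a - b)]
  rw [dist_eq_norm]
  apply abs_le_of_sq_le_sq' _ (by positivity) |>.2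
  rw [exy]
  have := sq_le_sq' (by linarith [abs_nonneg (a-b)]) h2
  have q0 := sq_le_sq' (by linarith [abs_nonneg (a0-b0)]) h0
  have q1 := sq_le_sq' (by linarith [abs_nonneg (a1-b1)]) h1
  rw [sq_abs] at this q0 q1
  nlinarith

lemma piece_measure (i : Fin 3) (s : ℝ) (hs : s = 1 ∨ s = -1) (x : E3) (r : ℝ) (hr : 0 ≤ r) :
    Measure.hausdorffMeasure 2
      {y : E3 | ‖y‖ = 1 ∧ 1 / 2 ≤ s * y i ∧ dist y x ≤ r} ≤ ENNReal.ofReal (100 * r ^ 2) := by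
  set T := {y : E3 | ‖y‖ = 1 ∧ 1 / 2 ≤ s * y i ∧ dist y x ≤ r} with hT
  have hanti : ∀ y ∈ T, ∀ z ∈ T, dist y z ≤ 5 * dist (projE i y) (projE i z) :=
    fun y hy z hz => proj_antilip i s hs y z hy.1 hz.1 hy.2.1 hz.2.1
  set g := Function.invFunOn (projE i) T with hg
  have hgm : ∀ p ∈ projE i '' T, g p ∈ T ∧ projE i (g p) = p := fun p hp =>
    Function.invFunOn_pos hp
  have hlip : LipschitzOnWith 5 g (projE i '' T) := by
    apply LipschitzOnWith.of_dist_le_mul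
    intro p hp q hq
    have := hanti _ (hgm p hp).1 _ (hgm q hq).1
    rw [(hgm p hp).2, (hgm q hq).2] at this
    simpa using this
  have hsub : T ⊆ g '' (projE i '' T) := by
    intro y hy
    refine ⟨projE i y, ⟨y, hy, rfl⟩, ?_⟩
    have hp := hgm (projE i y) ⟨y, hy, rfl⟩
    have := hanti _ hp.1 _ hy
    rw [hp.2, dist_self, mul_zero] at this
    exact dist_le_zero.1 this
  have hball : projE i '' T ⊆ Metric.closedBall (projE i x) r := by
    rintro _ ⟨y, hy, rfl⟩
    rw [Metric.mem_closedBall, dist_pi_le_iff hr]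
    intro j
    refine le_trans ?_ hy.2.2
    rw [dist_eq_norm, dist_eq_norm]
    exact PiLp.norm_apply_le (y - x) (i.succAbove j)
  have hvol : (Measure.hausdorffMeasure 2 : Measure (Fin 2 → ℝ)) = volume := by
    have := hausdorffMeasure_pi_real (ι := Fin 2)
    simpa using this
  calc Measure.hausdorffMeasure 2 T ≤ Measure.hausdorffMeasure 2 (g '' (projE i '' T)) :=
        measure_mono hsub
    _ ≤ ((5 : NNReal) : ENNReal) ^ (2 : ℝ) * Measure.hausdorffMeasure 2 (projE i '' T) :=
        hlip.hausdorffMeasure_image_le (by norm_num)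
    _ ≤ ((5 : NNReal) : ENNReal) ^ (2 : ℝ) * volume (Metric.closedBall (projE i x) r) := by
        rw [hvol]; gcongr
    _ = ENNReal.ofReal (100 * r ^ 2) := by
        rw [Real.volume_pi_closedBall _ hr]
        have : ((5 : NNReal) : ENNReal) ^ (2 : ℝ) = ENNReal.ofReal 25 := by
          rw [ENNReal.rpow_two]
          norm_num
        rw [this, ← ENNReal.ofReal_mul (by norm_num)]
        congr 1
        simp; ring

lemma sph_ball (x : E3) (r : ℝ) (hr : 0 ≤ r) :
    sphMeasure (Metric.closedBall x r) ≤ ENNReal.ofReal (600 * r ^ 2) := by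
  rw [sphMeasure, Measure.restrict_apply Metric.isClosed_closedBall.measurableSet]
  have hsub : Metric.closedBall x r ∩ Metric.sphere 0 1 ⊆
      ⋃ p : Fin 3 × Bool, {y : E3 | ‖y‖ = 1 ∧
        1 / 2 ≤ (if p.2 then (1 : ℝ) else -1) * y p.1 ∧ dist y x ≤ r} := by
    rintro y ⟨hy1, hy2⟩
    have hy2 : ‖y‖ = 1 := by simpa using hy2
    have hn := EuclideanSpace.norm_sq_eq y
    rw [hy2, Fin.sum_univ_three] at hn
    have : ∃ i, 1 / 2 ≤ |y i| := by
      by_contra! h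
      have h0 := h 0
      have h1 := h 1
      have h2 := h 2
      simp only [Real.norm_eq_abs] at hn
      nlinarith [abs_nonneg (y 0), abs_nonneg (y 1), abs_nonneg (y 2)]
    obtain ⟨i, hi⟩ := this
    rw [Set.mem_iUnion]
    rcases le_abs.1 hi with h | h
    · exact ⟨(i, true), hy2, by simpa using h, hy1⟩
    · exact ⟨(i, false), hy2, by simpa using h, hy1⟩
  calc _ ≤ _ := measure_mono hsub
    _ ≤ _ := measure_iUnion_le _
    _ ≤ ∑' p : Fin 3 × Bool, ENNReal.ofReal (100 * r ^ 2) := by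
        apply ENNReal.tsum_le_tsum
        intro p
        apply piece_measure _ _ _ _ _ hr
        split_ifs <;> simp
    _ = _ := by
        rw [tsum_fintype]
        simp only [Finset.sum_const, Finset.card_univ, Fintype.card_prod, Fintype.card_fin,
          Fintype.card_bool, nsmul_eq_mul]
        rw [show (600 * r ^ 2 : ℝ) = 6 * (100 * r ^ 2) by ring, ENNReal.ofReal_mul (by norm_num : (0:ℝ) ≤ 6)]
        norm_num

lemma sph_univ : sphMeasure Set.univ ≤ ENNReal.ofReal 600 := by
  have h : sphMeasure Set.univ = sphMeasure (Metric.closedBall (0 : E3) 1) := by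
    rw [sphMeasure, Measure.restrict_apply_univ,
      Measure.restrict_apply Metric.isClosed_closedBall.measurableSet,
      Set.inter_eq_right.2 Metric.sphere_subset_closedBall]
  rw [h]
  simpa using sph_ball 0 1 zero_le_one

instance : IsFiniteMeasure sphMeasure := ⟨sph_univ.trans_lt ENNReal.ofReal_lt_top⟩

lemma sph_ne (x : E3) : ∀ᵐ y ∂sphMeasure, y ≠ x := by
  rw [ae_iff]
  have : {a | ¬ a ≠ x} = Metric.closedBall x 0 := by ext; simp
  rw [this]
  simpa using sph_ball x 0 le_rfl

lemma sph_norm : ∀ᵐ y ∂sphMeasure, ‖y‖ = 1 := by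
  have := ae_restrict_mem (μ := (Measure.hausdorffMeasure 2 : Measure E3))
    (Metric.isClosed_sphere (x := (0 : E3)) (ε := 1)).measurableSet
  filter_upwards [this] with y hy
  simpa using hy

/-- The weight `1 / |x - y|`. -/
def wt (x y : E3) : ENNReal := ENNReal.ofReal ‖x - y‖⁻¹

lemma wt_symm (x y : E3) : wt x y = wt y x := by rw [wt, wt, norm_sub_rev]

lemma wt_meas : Measurable (Function.uncurry wt) := by
  unfold wt Function.uncurry
  fun_prop

lemma wt_bound : ∃ M : NNReal, ∀ x, ∫⁻ y, wt x y ∂sphMeasure ≤ M := by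
  have hfin : ∫⁻ t in Set.Ioi (1 : ℝ), ENNReal.ofReal (600 * t ^ (-2 : ℝ)) < ⊤ := by
    have : IntegrableOn (fun t : ℝ => 600 * t ^ (-2 : ℝ)) (Set.Ioi 1) :=
      (integrableOn_Ioi_rpow_of_lt (by norm_num) one_pos).const_mul 600
    exact this.lintegral_lt_top
  refine ⟨(ENNReal.ofReal 600 + ∫⁻ t in Set.Ioi (1 : ℝ), ENNReal.ofReal (600 * t ^ (-2 : ℝ))).toNNReal,
    fun x => ?_⟩
  rw [ENNReal.coe_toNNReal (by finiteness)]
  unfold wt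
  rw [lintegral_eq_lintegral_meas_lt sphMeasure (Filter.Eventually.of_forall fun y => by positivity)
    (by fun_prop)]
  rw [← Set.Ioc_union_Ioi_eq_Ioi (zero_le_one (α := ℝ))]
  refine (lintegral_union_le _ _ _).trans ?_
  gcongr ?_ + ?_
  · calc _ ≤ ∫⁻ t in Set.Ioc (0 : ℝ) 1, ENNReal.ofReal 600 :=
          lintegral_mono fun t => (measure_mono (Set.subset_univ _)).trans sph_univ
      _ = _ := by simp
  · refine setLIntegral_mono' measurableSet_Ioi fun t ht => ?_
    have ht : 1 < t := ht
    have ht0 : 0 < t := by linarith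
    calc _ ≤ sphMeasure (Metric.closedBall x t⁻¹) := by
          apply measure_mono
          intro y hy
          have hy : t < ‖x - y‖⁻¹ := hy
          rw [Metric.mem_closedBall, dist_comm, dist_eq_norm]
          have := inv_anti₀ ht0 hy.le
          rwa [inv_inv] at this
      _ ≤ _ := sph_ball _ _ (by positivity)
      _ = _ := by
        congr 2
        rw [Real.rpow_neg ht0.le]
        norm_num

lemma schur_est {α : Type*} [MeasurableSpace α] (μ : Measure α) [SFinite μ]
    (w : α → α → ENNReal) (hwm : Measurable (Function.uncurry w))
    (hsymm : ∀ x y, w x y = w y x) (M : NNReal) (hM : ∀ x, ∫⁻ y, w x y ∂μ ≤ M)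
    (g : α → ENNReal) (hg : Measurable g) :
    ∫⁻ x, (∫⁻ y, w x y * g y ∂μ) ^ (2 : ℝ) ∂μ ≤ (M : ENNReal) ^ (2 : ℝ) * ∫⁻ y, g y ^ (2 : ℝ) ∂μ := by
  have hwx : ∀ x, Measurable (w x) := fun x => hwm.of_uncurry_left
  have h1 : ∀ x, (∫⁻ y, w x y * g y ∂μ) ^ (2 : ℝ) ≤ M * ∫⁻ y, w x y * g y ^ (2 : ℝ) ∂μ := by
    intro x
    have hh := ENNReal.lintegral_mul_le_Lp_mul_Lq μ Real.HolderConjugate.two_two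
      (f := fun y => w x y ^ (1 / 2 : ℝ)) (g := fun y => w x y ^ (1 / 2 : ℝ) * g y)
      ((hwx x).pow_const _).aemeasurable (((hwx x).pow_const _).mul hg).aemeasurable
    have e1 : ∀ y, ((fun y => w x y ^ (1 / 2 : ℝ)) * (fun y => w x y ^ (1 / 2 : ℝ) * g y)) y
        = w x y * g y := by
      intro y
      simp only [Pi.mul_apply]
      rw [← mul_assoc, ← ENNReal.rpow_add_of_nonneg _ _ (by norm_num) (by norm_num)]
      norm_num
    have e2 : ∀ y, (w x y ^ (1 / 2 : ℝ)) ^ (2 : ℝ) = w x y := by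
      intro y; rw [← ENNReal.rpow_mul]; norm_num
    have e3 : ∀ y, (w x y ^ (1 / 2 : ℝ) * g y) ^ (2 : ℝ) = w x y * g y ^ (2 : ℝ) := by
      intro y; rw [ENNReal.mul_rpow_of_nonneg _ _ (by norm_num), e2]
    simp only [e1, e2, e3] at hh
    calc _ ≤ _ := ENNReal.rpow_le_rpow hh (by norm_num : (0 : ℝ) ≤ 2)
      _ = (∫⁻ y, w x y ∂μ) * ∫⁻ y, w x y * g y ^ (2 : ℝ) ∂μ := by
        rw [ENNReal.mul_rpow_of_nonneg _ _ (by norm_num), ← ENNReal.rpow_mul, ← ENNReal.rpow_mul]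
        norm_num
      _ ≤ _ := by gcongr; exact hM x
  have hm2 : Measurable (fun p : α × α => w p.1 p.2 * g p.2 ^ (2 : ℝ)) :=
    hwm.mul ((hg.comp measurable_snd).pow_const _)
  calc _ ≤ ∫⁻ x, M * ∫⁻ y, w x y * g y ^ (2 : ℝ) ∂μ ∂μ := lintegral_mono h1
    _ = M * ∫⁻ x, ∫⁻ y, w x y * g y ^ (2 : ℝ) ∂μ ∂μ := by
      rw [lintegral_const_mul]
      exact hm2.lintegral_prod_right'
    _ = M * ∫⁻ y, ∫⁻ x, w x y * g y ^ (2 : ℝ) ∂μ ∂μ := by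
      rw [lintegral_lintegral_swap hm2.aemeasurable]
    _ ≤ M * ∫⁻ y, M * g y ^ (2 : ℝ) ∂μ := by
      gcongr with y
      rw [lintegral_mul_const _ (by simp_rw [hsymm _ y]; exact hwx y)]
      gcongr
      simp_rw [hsymm _ y]; exact hM y
    _ = _ := by
      rw [lintegral_const_mul _ (hg.pow_const _), ← mul_assoc, ENNReal.rpow_two, sq]

lemma schur {α : Type*} [MeasurableSpace α] (μ : Measure α) [SFinite μ]
    (w : α → α → ENNReal) (hwm : Measurable (Function.uncurry w))
    (hsymm : ∀ x y, w x y = w y x) (M : NNReal) (hM : ∀ x, ∫⁻ y, w x y ∂μ ≤ M)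
    (κ : α → α → ℂ) (hκ : Measurable (Function.uncurry κ)) (c : NNReal)
    (h : ∀ᵐ x ∂μ, ∀ᵐ y ∂μ, ‖κ x y‖ₑ ≤ c * w x y) :
    ∃ T : Lp ℂ 2 μ →L[ℂ] Lp ℂ 2 μ, (∀ f : Lp ℂ 2 μ, ∀ᵐ x ∂μ, T f x = ∫ y, κ x y * f y ∂μ) ∧
      ‖T‖ ≤ c * M ∧ ∀ f : Lp ℂ 2 μ, ∀ᵐ x ∂μ, Integrable (fun y => κ x y * f y) μ := by
  have hfm : ∀ f : Lp ℂ 2 μ, Measurable (f : α → ℂ) := fun f => (Lp.stronglyMeasurable f).measurable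
  have hprod : ∀ f : Lp ℂ 2 μ, Measurable (fun p : α × α => κ p.1 p.2 * f p.2) :=
    fun f => hκ.mul ((hfm f).comp measurable_snd)
  have hnormf : ∀ f : Lp ℂ 2 μ, ∫⁻ y, ‖f y‖ₑ ^ (2 : ℝ) ∂μ = eLpNorm f 2 μ ^ (2 : ℝ) := by
    intro f
    rw [eLpNorm_eq_lintegral_rpow_enorm_toReal two_ne_zero ENNReal.ofNat_ne_top, ← ENNReal.rpow_mul]
    norm_num
  have hest : ∀ f : Lp ℂ 2 μ, ∫⁻ x, (∫⁻ y, w x y * ‖f y‖ₑ ∂μ) ^ (2 : ℝ) ∂μ ≤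
      (M * eLpNorm f 2 μ) ^ (2 : ℝ) := by
    intro f
    rw [ENNReal.mul_rpow_of_nonneg _ _ (by norm_num), ← hnormf]
    exact schur_est μ w hwm hsymm M hM _ (hfm f).enorm
  have hwf : ∀ f : Lp ℂ 2 μ, Measurable (fun p : α × α => w p.1 p.2 * ‖f p.2‖ₑ) :=
    fun f => hwm.mul ((hfm f).comp measurable_snd).enorm
  have hle : ∀ f : Lp ℂ 2 μ, ∀ᵐ x ∂μ, ∫⁻ y, ‖κ x y * f y‖ₑ ∂μ ≤ c * ∫⁻ y, w x y * ‖f y‖ₑ ∂μ := by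
    intro f
    filter_upwards [h] with x hx
    rw [← lintegral_const_mul (f := fun y => w x y * ‖f y‖ₑ) _ ((hwf f).comp measurable_prodMk_left)]
    apply lintegral_mono_ae
    filter_upwards [hx] with y hy
    rw [enorm_mul, ← mul_assoc]
    gcongr
  have hIntegr : ∀ f : Lp ℂ 2 μ, ∀ᵐ x ∂μ, Integrable (fun y => κ x y * f y) μ := by
    intro f
    have hfin : ∀ᵐ x ∂μ, (∫⁻ y, w x y * ‖f y‖ₑ ∂μ) ^ (2 : ℝ) < ⊤ := by
      apply ae_lt_top ((hwf f).lintegral_prod_right'.pow_const _)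
      refine ((hest f).trans_lt ?_).ne
      have := Lp.eLpNorm_lt_top f
      finiteness
    filter_upwards [hfin, hle f] with x hx hx2
    refine ⟨((hprod f).comp measurable_prodMk_left).aestronglyMeasurable, ?_⟩
    refine hx2.trans_lt ?_
    have : ∫⁻ y, w x y * ‖f y‖ₑ ∂μ < ⊤ := by
      by_contra h'
      rw [not_lt, top_le_iff] at h'
      rw [h'] at hx
      norm_num at hx
    finiteness
  have hnorm : ∀ f : Lp ℂ 2 μ, eLpNorm (fun x => ∫ y, κ x y * f y ∂μ) 2 μ ≤ c * M * eLpNorm f 2 μ := by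
    intro f
    rw [eLpNorm_eq_lintegral_rpow_enorm_toReal two_ne_zero ENNReal.ofNat_ne_top]
    simp only [ENNReal.toReal_ofNat]
    rw [one_div, ENNReal.rpow_inv_le_iff (by norm_num), mul_assoc,
      ENNReal.mul_rpow_of_nonneg _ _ (by norm_num)]
    calc _ ≤ ∫⁻ x, (c : ENNReal) ^ (2 : ℝ) * (∫⁻ y, w x y * ‖f y‖ₑ ∂μ) ^ (2 : ℝ) ∂μ := by
          apply lintegral_mono_ae
          filter_upwards [hle f] with x hx
          rw [← ENNReal.mul_rpow_of_nonneg _ _ (by norm_num)]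
          gcongr
          exact (enorm_integral_le_lintegral_enorm _).trans hx
      _ = (c : ENNReal) ^ (2 : ℝ) * ∫⁻ x, (∫⁻ y, w x y * ‖f y‖ₑ ∂μ) ^ (2 : ℝ) ∂μ := by
          rw [lintegral_const_mul _ ((hwf f).lintegral_prod_right'.pow_const _)]
      _ ≤ _ := by gcongr; exact hest f
  have hmem : ∀ f : Lp ℂ 2 μ, MemLp (fun x => ∫ y, κ x y * f y ∂μ) 2 μ := by
    intro f
    refine ⟨(hprod f).stronglyMeasurable.integral_prod_right'.aestronglyMeasurable, ?_⟩
    refine (hnorm f).trans_lt ?_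
    have := Lp.eLpNorm_lt_top f
    finiteness
  let T0 : Lp ℂ 2 μ →ₗ[ℂ] Lp ℂ 2 μ :=
    { toFun := fun f => (hmem f).toLp
      map_add' := by
        intro f g
        ext1
        filter_upwards [(hmem (f + g)).coeFn_toLp, (hmem f).coeFn_toLp, (hmem g).coeFn_toLp,
          hIntegr f, hIntegr g, Lp.coeFn_add (hmem f).toLp (hmem g).toLp] with x h1 h2 h3 h4 h5 h6
        rw [h1, h6, Pi.add_apply, h2, h3, ← integral_add h4 h5]
        apply integral_congr_ae
        filter_upwards [Lp.coeFn_add f g] with y hy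
        rw [hy, Pi.add_apply, mul_add]
      map_smul' := by
        intro a f
        ext1
        filter_upwards [(hmem (a • f)).coeFn_toLp, (hmem f).coeFn_toLp,
          Lp.coeFn_smul a (hmem f).toLp] with x h1 h2 h6
        rw [h1, RingHom.id_apply, h6, Pi.smul_apply, h2, smul_eq_mul, ← integral_const_mul]
        apply integral_congr_ae
        filter_upwards [Lp.coeFn_smul a f] with y hy
        rw [hy, Pi.smul_apply, smul_eq_mul]
        ring }
  have hb : ∀ f, ‖T0 f‖ ≤ (c * M : ℝ) * ‖f‖ := by
    intro f
    change ‖(hmem f).toLp‖ ≤ _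
    rw [Lp.norm_toLp, Lp.norm_def]
    have := ENNReal.toReal_mono (by have := Lp.eLpNorm_lt_top f; finiteness) (hnorm f)
    simpa [ENNReal.toReal_mul] using this
  refine ⟨T0.mkContinuous _ hb, ?_, T0.mkContinuous_norm_le (by positivity) hb, hIntegr⟩
  intro f
  exact (hmem f).coeFn_toLp

/-- The kernel of `K*_j`. -/
def kj (j : ℕ) (x y : EuclideanSpace ℝ (Fin 3)) : ℂ :=
  -(Complex.I ^ j * ((j : ℂ) - 1) / (4 * Real.pi * (Nat.factorial j : ℂ))) *
    (((‖x - y‖ ^ ((j : ℤ) - 3) : ℝ) : ℂ) * ((⟪x - y, x⟫ : ℝ) : ℂ))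

/-- Closed form of the kernel of `K^{k,*}` off the diagonal. -/
def kst (k : ℂ) (x y : EuclideanSpace ℝ (Fin 3)) : ℂ :=
  (1 - Complex.I * k * ‖x - y‖) * Complex.exp (Complex.I * k * ‖x - y‖) /
    (4 * Real.pi * (‖x - y‖ : ℂ) ^ 3) * ((⟪x - y, x⟫ : ℝ) : ℂ)

lemma kj_meas (j : ℕ) : Measurable (Function.uncurry (kj j)) := by
  unfold kj Function.uncurry
  have : Measurable (fun p : EuclideanSpace ℝ (Fin 3) × EuclideanSpace ℝ (Fin 3) =>
      ‖p.1 - p.2‖ ^ ((j : ℤ) - 3)) :=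
    (by fun_prop : Measurable (fun p : EuclideanSpace ℝ (Fin 3) × EuclideanSpace ℝ (Fin 3) =>
      ‖p.1 - p.2‖)).pow_const _
  fun_prop

lemma kst_meas (k : ℂ) : Measurable (Function.uncurry (kst k)) := by
  unfold kst Function.uncurry
  fun_prop

lemma inner_sph (x y : EuclideanSpace ℝ (Fin 3)) (hx : ‖x‖ = 1) (hy : ‖y‖ = 1) :
    ⟪x - y, x⟫ = ‖x - y‖ ^ 2 / 2 := by
  rw [norm_sub_sq_real, inner_sub_left, real_inner_self_eq_norm_sq, hx, hy, real_inner_comm]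
  ring

lemma kj_bound (j : ℕ) (x y : EuclideanSpace ℝ (Fin 3)) (hx : ‖x‖ = 1) (hy : ‖y‖ = 1)
    (hxy : y ≠ x) : ‖kj j x y‖ ≤ 4 ^ j / (Nat.factorial j : ℝ) * ‖x - y‖⁻¹ := by
  have hr : 0 < ‖x - y‖ := norm_pos_iff.2 (sub_ne_zero.2 hxy.symm)
  have hr2 : ‖x - y‖ ≤ 2 := (norm_sub_le _ _).trans (by rw [hx, hy]; norm_num)
  rw [kj, inner_sph x y hx hy]
  set r := ‖x - y‖ with hrdef
  have e : ((r ^ ((j : ℤ) - 3) : ℝ) : ℂ) * ((r ^ 2 / 2 : ℝ) : ℂ) = ((r ^ j * r⁻¹ / 2 : ℝ) : ℂ) := by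
    rw [← Complex.ofReal_mul]
    congr 1
    rw [zpow_sub₀ hr.ne', zpow_natCast]
    norm_cast
    field_simp
  have hj : ‖(j : ℂ) - 1‖ ≤ 2 ^ j := by
    rcases j with _ | j
    · simp
    · push_cast
      rw [add_sub_cancel_right, Complex.norm_natCast]
      exact_mod_cast (Nat.lt_two_pow_self.le.trans (Nat.pow_le_pow_right (by norm_num) (Nat.le_succ j)))
  rw [e, norm_mul, norm_neg, norm_div, norm_mul, norm_pow, Complex.norm_I, one_pow, one_mul,
    Complex.norm_real, Real.norm_of_nonneg (by positivity), norm_mul, norm_mul,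
    Complex.norm_natCast, Complex.norm_real, Real.norm_of_nonneg Real.pi_pos.le]
  have hf : (0 : ℝ) < Nat.factorial j := by positivity
  have hpi : (1 : ℝ) ≤ ‖(4 : ℂ)‖ * Real.pi := by
    norm_num
    linarith [Real.pi_gt_three]
  calc _ ≤ 2 ^ j / (1 * (Nat.factorial j : ℝ)) * (2 ^ j * r⁻¹ / 1) := by
        gcongr
        norm_num
    _ = _ := by
        rw [show (4 : ℝ) = 2 * 2 by norm_num, mul_pow]
        ring

lemma hasSum_aux (w : ℂ) :
    HasSum (fun j : ℕ => -(((j : ℂ) - 1) * w ^ j / (Nat.factorial j : ℂ)))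
      ((1 - w) * Complex.exp w) := by
  have h0 : HasSum (fun j : ℕ => w ^ j / (Nat.factorial j : ℂ)) (Complex.exp w) := by
    rw [Complex.exp_eq_exp_ℂ]
    exact NormedSpace.expSeries_div_hasSum_exp w
  have h1 : HasSum (fun j : ℕ => (j : ℂ) * w ^ j / (Nat.factorial j : ℂ)) (w * Complex.exp w) := by
    rw [← hasSum_nat_add_iff' 1]
    simp only [Finset.range_one, Finset.sum_singleton, Nat.cast_zero, zero_mul, zero_div, sub_zero]
    convert! h0.mul_left w using 2 with j
    rw [Nat.factorial_succ]
    have : ((j : ℂ) + 1) ≠ 0 := by exact_mod_cast Nat.succ_ne_zero j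
    have h2 : (Nat.factorial j : ℂ) ≠ 0 := by exact_mod_cast Nat.factorial_ne_zero j
    push_cast
    field_simp
    ring
  convert! h0.sub h1 using 1
  · ext j; ring
  · ring

lemma kst_hasSum (k : ℂ) (x y : EuclideanSpace ℝ (Fin 3)) (hxy : y ≠ x) :
    HasSum (fun j => k ^ j * kj j x y) (kst k x y) := by
  have hr : (‖x - y‖ : ℂ) ≠ 0 := by
    exact_mod_cast (norm_pos_iff.2 (sub_ne_zero.2 hxy.symm)).ne'
  unfold kj kst
  set r := ‖x - y‖ with hrdef
  have hpi : (Real.pi : ℂ) ≠ 0 := by exact_mod_cast Real.pi_ne_zero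
  have := (hasSum_aux (Complex.I * k * r)).mul_right
    ((4 * Real.pi * (r : ℂ) ^ 3)⁻¹ * ((⟪x - y, x⟫ : ℝ) : ℂ))
  convert! this using 1
  · ext j
    have h2 : (Nat.factorial j : ℂ) ≠ 0 := by exact_mod_cast Nat.factorial_ne_zero j
    rw [Complex.ofReal_zpow, zpow_sub₀ hr, zpow_natCast, mul_pow, mul_pow]
    have : (r : ℂ) ^ (3 : ℤ) = (r : ℂ) ^ 3 := by norm_cast
    rw [this]
    field_simp
  · ring

lemma gradG_eq (k : ℂ) (x y : EuclideanSpace ℝ (Fin 3)) (hxy : y ≠ x) :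
    ∑ i : Fin 3, gradG k (x - y) i * (x i : ℂ) = kst k x y := by
  have hz : x - y ≠ 0 := sub_ne_zero.2 hxy.symm
  unfold kst gradG
  set z := x - y with hzdef
  have hr : 0 < ‖z‖ := norm_pos_iff.2 hz
  have hrc : (‖z‖ : ℂ) ≠ 0 := by exact_mod_cast hr.ne'
  have hpi : (Real.pi : ℂ) ≠ 0 := by exact_mod_cast Real.pi_ne_zero
  have hn : HasFDerivAt (fun z : EuclideanSpace ℝ (Fin 3) => ‖z‖) (‖z‖⁻¹ • innerSL ℝ z) z := by
    have h := ((hasStrictFDerivAt_norm_sq z).hasFDerivAt).sqrt (by positivity)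
    simp only [Real.sqrt_sq (norm_nonneg _)] at h
    convert! h using 1
    ext v
    simp only [smul_apply, smul_eq_mul, nsmul_eq_mul]
    push_cast
    field_simp
  have hc : HasDerivAt (fun r : ℝ => -Complex.exp (Complex.I * k * r) / ((4 * Real.pi * r : ℝ) : ℂ))
      ((1 - Complex.I * k * ‖z‖) * Complex.exp (Complex.I * k * ‖z‖) / (4 * Real.pi * (‖z‖ : ℂ) ^ 2))
      ‖z‖ := by
    have h1 : HasDerivAt (fun w : ℂ => -Complex.exp (Complex.I * k * w) / (4 * Real.pi * w))
      ((1 - Complex.I * k * ‖z‖) * Complex.exp (Complex.I * k * ‖z‖) / (4 * Real.pi * (‖z‖ : ℂ) ^ 2))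
      (‖z‖ : ℂ) := by
      have hd := (((hasDerivAt_id (‖z‖ : ℂ)).const_mul (Complex.I * k)).cexp.neg).div
        ((hasDerivAt_id (‖z‖ : ℂ)).const_mul (4 * Real.pi : ℂ)) (by simp [hrc, hpi])
      convert! hd using 1
      simp only [id_eq, Pi.neg_apply]
      field_simp
      ring
    have h2 := h1.comp_ofReal
    push_cast
    exact h2
  have hG : HasFDerivAt (G k) _ z := hc.hasFDerivAt.comp z hn
  rw [hG.fderiv]
  have hin : (⟪z, x⟫ : ℝ) = ∑ i, x i * z i := by
    rw [PiLp.inner_apply]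
    simp
  rw [hin]
  push_cast
  rw [Finset.mul_sum]
  refine Finset.sum_congr rfl fun i _ => ?_
  rw [Function.comp_apply, ContinuousLinearMap.toSpanSingleton_apply, Pi.smul_apply, innerSL_apply_apply,
    EuclideanSpace.inner_single_right]
  simp
  field_simp

lemma enorm_le_wt (a : ℂ) (c : NNReal) (x y : EuclideanSpace ℝ (Fin 3))
    (h : ‖a‖ ≤ c * ‖x - y‖⁻¹) : ‖a‖ₑ ≤ c * wt x y := by
  rw [wt, ← ofReal_norm, ← ENNReal.ofReal_coe_nnreal, ← ENNReal.ofReal_mul (by positivity)]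
  exact ENNReal.ofReal_le_ofReal h

lemma ae_pairs {P : EuclideanSpace ℝ (Fin 3) → EuclideanSpace ℝ (Fin 3) → Prop}
    (h : ∀ x y, ‖x‖ = 1 → ‖y‖ = 1 → y ≠ x → P x y) :
    ∀ᵐ x ∂sphMeasure, ∀ᵐ y ∂sphMeasure, P x y := by
  filter_upwards [sph_norm] with x hx
  filter_upwards [sph_norm, sph_ne x] with y hy hxy
  exact h x y hx hy hxy

/-- Tail of the exponential series of `4 |k|`. -/
def tl (k : ℂ) (n : ℕ) : NNReal :=
  ⟨∑' j : ℕ, (4 * ‖k‖) ^ (j + n) / (Nat.factorial (j + n) : ℝ), tsum_nonneg fun _ => by positivity⟩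

lemma tl_tendsto (k : ℂ) : Filter.Tendsto (fun n => (tl k n : ℝ)) Filter.atTop (nhds 0) :=
  tendsto_sum_nat_add (fun j => (4 * ‖k‖) ^ j / (Nat.factorial j : ℝ))

lemma rem_bound (k : ℂ) (n : ℕ) (x y : EuclideanSpace ℝ (Fin 3)) (hx : ‖x‖ = 1) (hy : ‖y‖ = 1)
    (hxy : y ≠ x) :
    ‖kst k x y - ∑ j ∈ Finset.range n, k ^ j * kj j x y‖ ≤ tl k n * ‖x - y‖⁻¹ := by
  have h1 := (hasSum_nat_add_iff' n).2 (kst_hasSum k x y hxy)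
  have hs : Summable (fun j : ℕ => (4 * ‖k‖) ^ (j + n) / (Nat.factorial (j + n) : ℝ)) :=
    (summable_nat_add_iff n).2 (Real.summable_pow_div_factorial (4 * ‖k‖))
  have h2 := hs.hasSum.mul_right ‖x - y‖⁻¹
  refine h1.norm_le_of_bounded h2 fun j => ?_
  rw [norm_mul, norm_pow]
  calc _ ≤ ‖k‖ ^ (j + n) * (4 ^ (j + n) / (Nat.factorial (j + n) : ℝ) * ‖x - y‖⁻¹) := by
        gcongr
        exact kj_bound _ x y hx hy hxy
    _ = _ := by rw [mul_pow]; ring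

lemma main_aux :
    ∃ K : ℕ → (Lp ℂ 2 sphMeasure →L[ℂ] Lp ℂ 2 sphMeasure),
      (∀ j : ℕ, ∀ f : Lp ℂ 2 sphMeasure, ∀ᵐ x ∂sphMeasure,
        K j f x = ∫ y, kj j x y * f y ∂sphMeasure) ∧
      (∃ C : ℝ, ∀ j : ℕ, ‖K j‖ ≤ C) ∧
      (∀ k : ℂ, ∃ Kstar : Lp ℂ 2 sphMeasure →L[ℂ] Lp ℂ 2 sphMeasure,
        (∀ f : Lp ℂ 2 sphMeasure, ∀ᵐ x ∂sphMeasure,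
          Kstar f x = ∫ y, kst k x y * f y ∂sphMeasure) ∧
        Filter.Tendsto (fun n => ∑ j ∈ Finset.range n, k ^ j • K j)
          Filter.atTop (nhds Kstar)) := by
  obtain ⟨M, hM⟩ := wt_bound
  have hK := fun j : ℕ => schur sphMeasure wt wt_meas wt_symm M hM (kj j) (kj_meas j)
    ⟨4 ^ j / (Nat.factorial j : ℝ), by positivity⟩
    (ae_pairs fun x y hx hy hxy => enorm_le_wt _ _ _ _ (kj_bound j x y hx hy hxy))
  choose K hK1 hK2 hK3 using hK
  refine ⟨K, hK1, ?_, ?_⟩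
  · have hs := Real.summable_pow_div_factorial 4
    refine ⟨(∑' j : ℕ, (4 : ℝ) ^ j / (Nat.factorial j : ℝ)) * M, fun j => (hK2 j).trans ?_⟩
    gcongr
    exact hs.le_tsum j fun i _ => by positivity
  · intro k
    have hmeas : ∀ n : ℕ, Measurable (Function.uncurry
        (fun x y => kst k x y - ∑ j ∈ Finset.range n, k ^ j * kj j x y)) := by
      intro n
      refine (kst_meas k).sub ?_
      exact Finset.measurable_fun_sum _ fun j _ => (kj_meas j).const_mul _
    have hT := fun n : ℕ => schur sphMeasure wt wt_meas wt_symm M hM _ (hmeas n) (tl k n)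
      (ae_pairs fun x y hx hy hxy => enorm_le_wt _ _ _ _ (rem_bound k n x y hx hy hxy))
    obtain ⟨S, hS1, -, hS3⟩ := schur sphMeasure wt wt_meas wt_symm M hM (kst k) (kst_meas k) (tl k 0)
      (ae_pairs fun x y hx hy hxy => enorm_le_wt _ _ _ _
        (by simpa using rem_bound k 0 x y hx hy hxy))
    choose T hT1 hT2 hT3 using hT
    refine ⟨S, hS1, ?_⟩
    have hsum : ∀ n (f : Lp ℂ 2 sphMeasure), ∀ᵐ x ∂sphMeasure,
        (∑ j ∈ Finset.range n, k ^ j • K j) f x =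
          ∫ y, (∑ j ∈ Finset.range n, k ^ j * kj j x y) * f y ∂sphMeasure ∧
        Integrable (fun y => (∑ j ∈ Finset.range n, k ^ j * kj j x y) * f y) sphMeasure := by
      intro n f
      induction n with
      | zero =>
        filter_upwards [Lp.coeFn_zero ℂ 2 sphMeasure] with x hx
        refine ⟨?_, by simp⟩
        change ((0 : Lp ℂ 2 sphMeasure) : EuclideanSpace ℝ (Fin 3) → ℂ) x = _
        rw [hx]
        simp
      | succ n ih =>
        filter_upwards [ih, hK1 n f, hK3 n f,
          Lp.coeFn_add ((∑ j ∈ Finset.range n, k ^ j • K j) f) ((k ^ n • K n) f),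
          Lp.coeFn_smul (k ^ n) (K n f)] with x h1 h2 h3 h4 h5
        have h3' := h3.const_mul (k ^ n)
        have e : ∀ y, (∑ j ∈ Finset.range (n + 1), k ^ j * kj j x y) * f y =
            (∑ j ∈ Finset.range n, k ^ j * kj j x y) * f y + k ^ n * (kj n x y * f y) := by
          intro y
          rw [Finset.sum_range_succ]
          ring
        simp_rw [e]
        refine ⟨?_, h1.2.add h3'⟩
        rw [integral_add h1.2 h3', ← h1.1, integral_const_mul, ← h2, Finset.sum_range_succ,
          add_apply, h4, Pi.add_apply, smul_apply, h5,
          Pi.smul_apply, smul_eq_mul]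
    have hD : ∀ n, S - ∑ j ∈ Finset.range n, k ^ j • K j = T n := by
      intro n
      ext1 f
      rw [sub_apply]
      apply Lp.ext
      filter_upwards [hsum n f, hS1 f, hS3 f, hT1 n f,
        Lp.coeFn_sub (S f) ((∑ j ∈ Finset.range n, k ^ j • K j) f)] with x h1 h2 h3 h4 h5
      rw [h5, Pi.sub_apply, h4, h1.1, h2, ← integral_sub h3 h1.2]
      congr 1
      ext y
      ring
    rw [tendsto_iff_norm_sub_tendsto_zero]
    refine squeeze_zero (fun _ => norm_nonneg _) (fun n => ?_)
      (by simpa using (tl_tendsto k).mul_const (M : ℝ))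
    rw [norm_sub_rev, hD]
    exact hT2 n

/-- There is a sequence `K*_j` of bounded linear operators on
`L²(S², σ; ℂ)`, given by the kernels `−(i^j (j−1)/(4π j!)) |x−y|^{j−3} ⟨x−y, x⟩`, which
is uniformly bounded in operator norm, and such that for every `k ∈ ℂ` the series
`∑ k^j K*_j` converges in operator norm to the Neumann–Poincaré operator `K^{k,*}` with
kernel `⟨∇G^k(x−y), ν_x⟩`, `ν_x = x`. -/
theorem neumann_poincare_operator_norm_expansion :
    ∃ K : ℕ → (Lp ℂ 2 sphMeasure →L[ℂ] Lp ℂ 2 sphMeasure),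
      (∀ j : ℕ, ∀ f : Lp ℂ 2 sphMeasure, ∀ᵐ x ∂sphMeasure,
        K j f x = -(Complex.I ^ j * ((j : ℂ) - 1) / (4 * Real.pi * (Nat.factorial j : ℂ))) *
          ∫ y, ((‖x - y‖ ^ ((j : ℤ) - 3) : ℝ) : ℂ) * ((⟪x - y, x⟫ : ℝ) : ℂ) * f y
            ∂sphMeasure) ∧
      (∃ C : ℝ, ∀ j : ℕ, ‖K j‖ ≤ C) ∧
      (∀ k : ℂ, ∃ Kstar : Lp ℂ 2 sphMeasure →L[ℂ] Lp ℂ 2 sphMeasure,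
        (∀ f : Lp ℂ 2 sphMeasure, ∀ᵐ x ∂sphMeasure,
          Kstar f x = ∫ y, (∑ i : Fin 3, gradG k (x - y) i * (x i : ℂ)) * f y
            ∂sphMeasure) ∧
        Filter.Tendsto (fun n => ∑ j ∈ Finset.range n, k ^ j • K j)
          Filter.atTop (nhds Kstar)) := by
  obtain ⟨K, h1, h2, h3⟩ := main_aux
  refine ⟨K, fun j f => ?_, h2, fun k => ?_⟩
  · filter_upwards [h1 j f] with x hx
    rw [hx, ← integral_const_mul]
    congr 1
    ext y
    rw [kj]
    ring
  · obtain ⟨S, hS, hS2⟩ := h3 k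
    refine ⟨S, fun f => ?_, hS2⟩
    filter_upwards [hS f] with x hx
    rw [hx]
    apply integral_congr_ae
    filter_upwards [sph_ne x] with y hy
    rw [gradG_eq k x y hy]
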